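/- Suppose β,γ ∈ [-1/2,1/2] and α ∈ (-1,0). There exists a constant C > 0, depending only on α, β, γ, a, b, such that for all integers m ≥ 1 and n ≥ 0: |A^{α,γ,β}_{mn}| ≤ C·c_n·m^{-2α-γ-3/2}. -/

import Mathlib

open Real MeasureTheory Set Filter

/-- Normalizing factor `δ'_n(β,γ)` for the orthonormal Jacobi polynomials. -/
noncomputable def jacobiDelta (β γ : ℝ) (n : ℕ) : ℝ :=
  Real.sqrt ((β + γ + 2 * n + 1) * Real.Gamma (β + γ + n + 1) /
    (n.factorial * Real.Gamma (β + n + 1) * Real.Gamma (γ + n + 1)))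

/-- The orthonormal Jacobi polynomial `p_n^{(β,γ)}` on `(a,b)`. -/
noncomputable def jacobiP (a b β γ : ℝ) (n : ℕ) (x : ℝ) : ℝ :=
  (-1 : ℝ) ^ n * (b - a) ^ (-(n : ℝ) - (β + γ + 1) / 2) * jacobiDelta β γ n *
    (x - a) ^ (-β) * (b - x) ^ (-γ) *
    iteratedDeriv n (fun t : ℝ => (t - a) ^ (β + n) * (b - t) ^ (γ + n)) x

/-- Generalized binomial coefficient `binom(x, j) = Γ(x+1)/(j!·Γ(x-j+1))`. -/
noncomputable def genBinom (x : ℝ) (j : ℕ) : ℝ :=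
  Real.Gamma (x + 1) / (j.factorial * Real.Gamma (x - j + 1))

/-- The coefficient `C̃_n^k(β,γ)`. -/
noncomputable def Ctilde (β γ : ℝ) (n k : ℕ) : ℝ :=
  ∑ i ∈ Finset.range (k + 1),
    (n.choose i : ℝ) * genBinom ((n : ℝ) + β) (n - i) * genBinom ((n : ℝ) + γ) i *
      (k.choose i : ℝ) * genBinom ((n : ℝ) - i) (k - i) * (i.factorial : ℝ)

/-- The Euler Beta function `B(x,y) = Γ(x)Γ(y)/Γ(x+y)`. -/
noncomputable def betaB (x y : ℝ) : ℝ := Real.Gamma x * Real.Gamma y / Real.Gamma (x + y)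

/-- The matrix coefficients `A^{α,β,γ}_{mn}`. -/
noncomputable def Acoef (α β γ : ℝ) (m n : ℕ) : ℝ :=
  jacobiDelta β γ m * jacobiDelta β γ n *
    ∑ k ∈ Finset.range (n + 1),
      (-1 : ℝ) ^ k * Ctilde β γ n k * betaB (α + β + k + 1) (γ + m + 1) /
        Real.Gamma ((k : ℝ) + α - m + 1)

/-- The coefficient `c_n = δ'_n·n!·Γ(n+β+1)·Γ(n+γ+1)/4^n`. -/
noncomputable def cCoef (β γ : ℝ) (n : ℕ) : ℝ :=
  jacobiDelta β γ n * n.factorial * Real.Gamma (n + β + 1) * Real.Gamma (n + γ + 1) / 4 ^ n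

/-- The weighted `L_p` norm `‖f‖_{L_p(I,ω)}` with `ω(x) = (x-a)^β (b-x)^γ`, `I = (a,b)`. -/
noncomputable def wnorm (a b β γ p : ℝ) (f : ℝ → ℝ) : ℝ :=
  (∫ x in Set.Ioo a b, |f x| ^ p * ((x - a) ^ β * (b - x) ^ γ)) ^ (1 / p)

/-- Membership in the weighted Lebesgue space `L_p(I,ω)`. -/
def MemWLp (a b β γ p : ℝ) (f : ℝ → ℝ) : Prop :=
  MeasurableSet (Set.Ioo a b) ∧
    IntegrableOn (fun x : ℝ => |f x| ^ p * ((x - a) ^ β * (b - x) ^ γ)) (Set.Ioo a b)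

/-- The right-sided Riemann–Liouville fractional integral `I^μ_{b-}`. -/
noncomputable def fracIntR (b μ : ℝ) (f : ℝ → ℝ) (x : ℝ) : ℝ :=
  (1 / Real.Gamma μ) * ∫ t in Set.Ioo x b, f t * (t - x) ^ (μ - 1)

/-- The left-sided Riemann–Liouville fractional integral `I^μ_{a+}`. -/
noncomputable def fracIntL (a μ : ℝ) (f : ℝ → ℝ) (x : ℝ) : ℝ :=
  (1 / Real.Gamma μ) * ∫ t in Set.Ioo a x, f t * (x - t) ^ (μ - 1)

/-- The right-sided Riemann–Liouville fractional derivative `D^μ_{b-}`. -/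
noncomputable def fracDerR (b μ : ℝ) (f : ℝ → ℝ) (x : ℝ) : ℝ :=
  - deriv (fun y : ℝ => fracIntR b (1 - μ) f y) x

/-- Jacobi coefficients `f_n` of a function `f`. -/
noncomputable def jacobiCoef (a b β γ : ℝ) (f : ℝ → ℝ) (n : ℕ) : ℝ :=
  ∫ x in Set.Ioo a b, f x * jacobiP a b β γ n x * ((x - a) ^ β * (b - x) ^ γ)

/-- Partial sums `S_k f` of the Jacobi series of `f`. -/
noncomputable def jacobiPartial (a b β γ : ℝ) (f : ℝ → ℝ) (k : ℕ) (x : ℝ) : ℝ :=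
  ∑ n ∈ Finset.range (k + 1), jacobiCoef a b β γ f n * jacobiP a b β γ n x

open Asymptotics



namespace S7

lemma gamma_seq_prod (x : ℝ) (hx : 0 < x) (m : ℕ) :
    Real.Gamma (x + m) = Real.Gamma x * ∏ j ∈ Finset.range m, (x + j) := by
  induction m with
  | zero => simp
  | succ k ih =>
    rw [Finset.prod_range_succ, ← mul_assoc, ← ih]
    push_cast
    rw [← add_assoc, Real.Gamma_add_one (by positivity)]
    ring

lemma gamma_asymp_tendsto (x : ℝ) (hx : 0 < x) :
    Tendsto (fun m : ℕ => ((m + 1 : ℕ) : ℝ) ^ x * (m.factorial : ℝ) / Real.Gamma (x + (m + 1 : ℕ)))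
      atTop (nhds 1) := by
  have h1 : Tendsto (fun m : ℕ => Real.GammaSeq x (m + 1)) atTop (nhds (Real.Gamma x)) :=
    (Real.GammaSeq_tendsto_Gamma x).comp (tendsto_add_atTop_nat 1)
  have h2 : Tendsto (fun m : ℕ => 1 + x * (1 / ((m : ℝ) + 1))) atTop (nhds (1 + x * 0)) :=
    (tendsto_one_div_add_atTop_nhds_zero_nat.const_mul x).const_add 1
  have h3 := (h1.mul h2).div_const (Real.Gamma x)
  have hG : Real.Gamma x ≠ 0 := (Real.Gamma_pos_of_pos hx).ne'
  rw [mul_zero, add_zero, mul_one, div_self hG] at h3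
  refine h3.congr fun m => ?_
  rw [gamma_seq_prod x hx, Real.GammaSeq, Finset.prod_range_succ _ (m + 1), Nat.factorial_succ]
  have hp : ∏ j ∈ Finset.range (m + 1), (x + (j : ℝ)) ≠ 0 :=
    Finset.prod_ne_zero_iff.2 fun j _ => by positivity
  have h5 : x + ((m : ℝ) + 1) ≠ 0 := by positivity
  push_cast
  field_simp
  ring

/-- two-sided bounds -/
lemma gamma_bounds (x : ℝ) (hx : 0 ≤ x) :
    ∃ c C : ℝ, 0 < c ∧ 0 < C ∧ ∀ m : ℕ, 1 ≤ m →
      c * ((m : ℝ) ^ x * ((m - 1).factorial : ℝ)) ≤ Real.Gamma (m + x) ∧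
      Real.Gamma (m + x) ≤ C * ((m : ℝ) ^ x * ((m - 1).factorial : ℝ)) := by
  rcases hx.eq_or_lt with rfl | hx
  · refine ⟨1, 1, one_pos, one_pos, fun m hm => ?_⟩
    obtain ⟨k, rfl⟩ := Nat.exists_eq_add_of_le' hm
    simp [Real.Gamma_nat_eq_factorial]
  · have h := gamma_asymp_tendsto x hx
    have h' := h.inv₀ one_ne_zero
    obtain ⟨A, hA⟩ := h.bddAbove_range
    obtain ⟨B, hB⟩ := h'.bddAbove_range
    have hA' : ∀ m : ℕ, _ ≤ A := fun m => hA ⟨m, rfl⟩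
    have hB' : ∀ m : ℕ, _ ≤ B := fun m => hB ⟨m, rfl⟩
    have hpos : ∀ m : ℕ, 0 < Real.Gamma (x + (m + 1 : ℕ)) := fun m =>
      Real.Gamma_pos_of_pos (by positivity)
    have hA0 : 0 < A := lt_of_lt_of_le (by have := hpos 0; positivity) (hA' 0)
    have hB0 : 0 < B := lt_of_lt_of_le (by have := hpos 0; positivity) (hB' 0)
    refine ⟨A⁻¹, B, by positivity, hB0, fun m hm => ?_⟩
    obtain ⟨k, rfl⟩ := Nat.exists_eq_add_of_le' hm
    have a1 := hA' k
    have b1 := hB' k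
    have hp := hpos k
    simp only [inv_div] at b1
    rw [div_le_iff₀ hp] at a1
    rw [div_le_iff₀ (by positivity)] at b1
    rw [add_comm _ x, Nat.add_sub_cancel]
    refine ⟨?_, b1⟩
    rw [inv_mul_le_iff₀ hA0]; exact a1

lemma gamma_upper (x : ℝ) (hx : -2 ≤ x) (hx2 : x ≤ 3 / 2) :
    ∃ G : ℝ, 0 < G ∧ ∀ k : ℕ, |Real.Gamma (x + k)| ≤ G * 2 ^ k * k.factorial := by
  refine ⟨|Real.Gamma x| + 1, by positivity, fun k => ?_⟩
  induction k with
  | zero => simp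
  | succ k ih =>
    push_cast
    rw [← add_assoc, Nat.factorial_succ, pow_succ]
    push_cast
    by_cases h0 : x + k = 0
    · rw [h0]
      have h1 : (1:ℝ) ≤ 2 ^ k := one_le_pow₀ (by norm_num)
      have h2 : (1:ℝ) ≤ k.factorial := by exact_mod_cast Nat.one_le_iff_ne_zero.2 k.factorial_ne_zero
      have h3 : (1:ℝ) ≤ |Real.Gamma x| + 1 := by linarith [abs_nonneg (Real.Gamma x)]
      have h4 : (1:ℝ) ≤ 2 * ((k:ℝ) + 1) := by linarith [Nat.cast_nonneg (α := ℝ) k]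
      simp only [zero_add, Real.Gamma_one, abs_one]
      have := one_le_mul_of_one_le_of_one_le (one_le_mul_of_one_le_of_one_le (one_le_mul_of_one_le_of_one_le h3 h1) h2) h4
      linarith
    · rw [Real.Gamma_add_one h0, abs_mul]
      have h4 : |x + k| ≤ 2 * ((k:ℝ) + 1) := by
        have := Nat.cast_nonneg (α := ℝ) k
        rw [abs_le]; constructor <;> linarith
      have := mul_le_mul h4 ih (abs_nonneg _) (by positivity)
      linarith

lemma gamma_lower_fact (x : ℝ) (hx : 1 ≤ x) (k : ℕ) :
    k.factorial * Real.Gamma x ≤ Real.Gamma (x + k) := by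
  induction k with
  | zero => simp
  | succ k ih =>
    push_cast
    rw [← add_assoc, Nat.factorial_succ, Real.Gamma_add_one (by positivity)]
    push_cast
    have := Real.Gamma_pos_of_pos (by linarith : 0 < x)
    have := mul_le_mul (by linarith : (k:ℝ) + 1 ≤ x + k) ih (by positivity) (by positivity)
    linarith

lemma gamma_lower_half (x : ℝ) (hx : 1 / 2 ≤ x) (k : ℕ) :
    Real.Gamma x ≤ 2 ^ k * Real.Gamma (x + k) := by
  induction k with
  | zero => simp
  | succ k ih =>
    push_cast
    have hk := Nat.cast_nonneg (α := ℝ) k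
    rw [← add_assoc, Real.Gamma_add_one (by positivity), pow_succ]
    refine ih.trans ?_
    have := Real.Gamma_pos_of_pos (by linarith : 0 < x + k)
    have : 2 ^ k * Real.Gamma (x + k) * 1 ≤ 2 ^ k * Real.Gamma (x + k) * (2 * (x + k)) := by
      gcongr; linarith
    linarith

lemma nonint {α : ℝ} (hα : α ∈ Set.Ioo (-1 : ℝ) 0) (j : ℤ) : min (-α) (1 + α) ≤ |(j : ℝ) + α| := by
  obtain ⟨h1, h2⟩ := hα
  rcases le_or_gt j 0 with h | h
  · have : (j : ℝ) ≤ 0 := by exact_mod_cast h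
    exact (min_le_left _ _).trans ((by linarith : -α ≤ -((j : ℝ) + α)).trans (neg_le_abs _))
  · have : (1 : ℝ) ≤ j := by exact_mod_cast h
    exact (min_le_right _ _).trans ((by linarith : 1 + α ≤ ((j : ℝ) + α)).trans (le_abs_self _))

lemma nonint0 {α : ℝ} (hα : α ∈ Set.Ioo (-1 : ℝ) 0) : 0 < min (-α) (1 + α) := by
  obtain ⟨h1, h2⟩ := hα
  exact lt_min (by linarith) (by linarith)

lemma inv_gamma_k {α : ℝ} (hα : α ∈ Set.Ioo (-1 : ℝ) 0) (m k : ℕ) :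
    |(Real.Gamma ((k : ℝ) + α - m + 1))⁻¹| ≤
      ((min (-α) (1 + α))⁻¹) ^ k * |(Real.Gamma (α - m + 1))⁻¹| := by
  have hd := nonint0 hα
  induction k with
  | zero => simp
  | succ k ih =>
    have h := nonint hα ((k : ℤ) - m + 1)
    push_cast at h ⊢
    have e : (k : ℝ) + 1 + α - m + 1 = ((k : ℝ) + α - m + 1) + 1 := by ring
    have e2 : (k : ℝ) - m + 1 + α = (k : ℝ) + α - m + 1 := by ring
    rw [e2] at h
    have hne : (k : ℝ) + α - m + 1 ≠ 0 := abs_pos.1 (hd.trans_le h)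
    rw [e, Real.Gamma_add_one hne, mul_inv, abs_mul, pow_succ', mul_assoc]
    refine mul_le_mul ?_ ih (abs_nonneg _) (by positivity)
    rw [abs_inv]
    exact inv_anti₀ hd h

lemma inv_gamma_m {α : ℝ} (hα : α ∈ Set.Ioo (-1 : ℝ) 0) (m : ℕ) :
    |(Real.Gamma (α - m + 1))⁻¹| = Real.Gamma (m + (-α)) / (Real.Gamma (-α) * Real.Gamma (α + 1)) := by
  have h1 : 0 < Real.Gamma (-α) := Real.Gamma_pos_of_pos (by linarith [hα.2])
  have h2 : 0 < Real.Gamma (α + 1) := Real.Gamma_pos_of_pos (by linarith [hα.1])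
  induction m with
  | zero => 
    simp only [Nat.cast_zero, sub_zero, zero_add]
    rw [abs_of_pos (by positivity)]; field_simp
  | succ m ih =>
    have hm := Nat.cast_nonneg (α := ℝ) m
    have hα2 := hα.2
    have hne : α - m ≠ 0 := by linarith
    rw [Real.Gamma_add_one hne, mul_inv, abs_mul] at ih
    push_cast
    rw [show α - ((m : ℝ) + 1) + 1 = α - m by ring, show (m : ℝ) + 1 + -α = (m + -α) + 1 by ring,
      Real.Gamma_add_one (by linarith), mul_div_assoc, ← ih, abs_inv (α - m), abs_of_neg (show α - m < 0 by linarith)]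
    have hne2 : -(α - (m : ℝ)) ≠ 0 := neg_ne_zero.2 hne
    rw [show (m : ℝ) + -α = -(α - m) by ring, mul_inv_cancel_left₀ hne2]

lemma sqrt_asymp (β γ : ℝ) (hβ : β ∈ Set.Icc (-(1 : ℝ) / 2) (1 / 2))
    (hγ : γ ∈ Set.Icc (-(1 : ℝ) / 2) (1 / 2)) :
    ∃ C : ℝ, 0 < C ∧ ∀ m : ℕ, 1 ≤ m →
      jacobiDelta γ β m ≤ C * ((m : ℝ) ^ (-(1:ℝ) / 2) * ((m - 1).factorial : ℝ)⁻¹) := by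
  obtain ⟨_, C1, _, hC1, H1⟩ := gamma_bounds (γ + β + 1) (by linarith [hβ.1, hγ.1])
  obtain ⟨c2, _, hc2, _, H2⟩ := gamma_bounds (β + 1) (by linarith [hβ.1, hγ.1])
  obtain ⟨c3, _, hc3, _, H3⟩ := gamma_bounds (γ + 1) (by linarith [hβ.1, hγ.1])
  refine ⟨Real.sqrt (4 * C1 / (c2 * c3)), by positivity, fun m hm => ?_⟩
  have hm0 : (0:ℝ) < m := by exact_mod_cast hm
  have hm1 : (1:ℝ) ≤ m := by exact_mod_cast hm
  have a1 := (H1 m hm).2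
  have a2 := (H2 m hm).1
  have a3 := (H3 m hm).1
  unfold jacobiDelta
  set F : ℝ := ((m - 1).factorial : ℝ) with hF
  have hF0 : 0 < F := by positivity
  have hfac : (m.factorial : ℝ) = m * F := by
    rw [hF]; exact_mod_cast (Nat.mul_factorial_pred (by omega)).symm
  have e0 : Real.sqrt (4 * C1 / (c2 * c3)) * ((m : ℝ) ^ (-(1:ℝ) / 2) * F⁻¹)
     = Real.sqrt (4 * C1 / (c2 * c3) * ((m : ℝ)⁻¹ * (F⁻¹)^2)) := by
    rw [Real.sqrt_mul (by positivity), Real.sqrt_mul (by positivity), Real.sqrt_sq (by positivity)]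
    congr 2
    rw [Real.sqrt_eq_rpow, ← Real.rpow_neg_one, ← Real.rpow_mul hm0.le]
    norm_num
  rw [e0, show γ + β + (m:ℝ) + 1 = m + (γ + β + 1) by ring, show γ + (m:ℝ) + 1 = m + (γ + 1) by ring,
    show β + (m:ℝ) + 1 = m + (β + 1) by ring, hfac]
  apply Real.sqrt_le_sqrt
  have b : (γ + β + 2 * m + 1) ≤ 4 * m := by linarith [hβ.2, hγ.2]
  have hg1 : 0 ≤ Real.Gamma (m + (γ + β + 1)) :=
    (Real.Gamma_pos_of_pos (by linarith [hβ.1, hγ.1])).le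
  have hg3 : 0 ≤ Real.Gamma (m + (γ + 1)) :=
    (Real.Gamma_pos_of_pos (by linarith [hβ.1, hγ.1])).le
  calc _ ≤ (4 * m * (C1 * ((m : ℝ) ^ (γ + β + 1) * F))) /
        (m * F * (c3 * ((m : ℝ) ^ (γ + 1) * F)) * (c2 * ((m : ℝ) ^ (β + 1) * F))) := by
        gcongr
    _ = _ := by
        rw [show γ + β + 1 = γ + β + 1 from rfl, Real.rpow_add hm0, Real.rpow_add hm0, Real.rpow_add hm0, Real.rpow_add hm0,
          Real.rpow_one]
        have : (m:ℝ) ^ γ ≠ 0 := by positivity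
        have : (m:ℝ) ^ β ≠ 0 := by positivity
        field_simp

lemma U_asymp (α β γ : ℝ) (hβ : β ∈ Set.Icc (-(1 : ℝ) / 2) (1 / 2))
    (hγ : γ ∈ Set.Icc (-(1 : ℝ) / 2) (1 / 2)) (hα : α ∈ Set.Ioo (-1 : ℝ) 0) :
    ∃ C : ℝ, 0 < C ∧ ∀ m : ℕ, 1 ≤ m →
      jacobiDelta γ β m * (Real.Gamma (β + m + 1) / Real.Gamma (m + (α + β + γ + 2)) *
        |(Real.Gamma (α - m + 1))⁻¹|) ≤ C * (m : ℝ) ^ (-2 * α - γ - 3 / 2) := by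
  obtain ⟨h1, h2⟩ := hα
  obtain ⟨C0, hC0, H0⟩ := sqrt_asymp β γ hβ hγ
  obtain ⟨_, C1, _, hC1, H1⟩ := gamma_bounds (β + 1) (by linarith [hβ.1, hγ.1])
  obtain ⟨c2, _, hc2, _, H2⟩ := gamma_bounds (α + β + γ + 2) (by linarith [hβ.1, hγ.1])
  obtain ⟨_, C3, _, hC3, H3⟩ := gamma_bounds (-α) (by linarith)
  have g1 : 0 < Real.Gamma (-α) := Real.Gamma_pos_of_pos (by linarith)
  have g2 : 0 < Real.Gamma (α + 1) := Real.Gamma_pos_of_pos (by linarith)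
  refine ⟨C0 * (C1 / c2 * (C3 / (Real.Gamma (-α) * Real.Gamma (α + 1)))), by positivity, fun m hm => ?_⟩
  have hm0 : (0:ℝ) < m := by exact_mod_cast hm
  have hm1 : (1:ℝ) ≤ m := by exact_mod_cast hm
  have a0 := H0 m hm
  have a1 := (H1 m hm).2
  have a2 := (H2 m hm).1
  have a3 := (H3 m hm).2
  rw [inv_gamma_m ⟨h1, h2⟩, show β + (m:ℝ) + 1 = m + (β + 1) by ring]
  set F : ℝ := ((m - 1).factorial : ℝ) with hF
  have hF0 : 0 < F := by positivity
  have p1 : 0 < Real.Gamma (m + (β + 1)) := Real.Gamma_pos_of_pos (by linarith [hβ.1])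
  have p2 : 0 < Real.Gamma (m + (α + β + γ + 2)) := Real.Gamma_pos_of_pos (by linarith [hβ.1, hγ.1])
  have p3 : 0 < Real.Gamma (m + -α) := Real.Gamma_pos_of_pos (by linarith)
  calc _ ≤ C0 * ((m : ℝ) ^ (-(1:ℝ) / 2) * F⁻¹) * ((C1 * ((m : ℝ) ^ (β + 1) * F)) /
        (c2 * ((m : ℝ) ^ (α + β + γ + 2) * F)) *
        ((C3 * ((m : ℝ) ^ (-α) * F)) / (Real.Gamma (-α) * Real.Gamma (α + 1)))) := by
        gcongr
    _ = C0 * (C1 / c2 * (C3 / (Real.Gamma (-α) * Real.Gamma (α + 1)))) *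
         ((m : ℝ) ^ (-(1:ℝ) / 2) * (m : ℝ) ^ (β + 1) / (m : ℝ) ^ (α + β + γ + 2) * (m : ℝ) ^ (-α)) := by
        have : (m:ℝ) ^ (α + β + γ + 2) ≠ 0 := by positivity
        field_simp
    _ = _ := by
        rw [← Real.rpow_add hm0, ← Real.rpow_sub hm0, ← Real.rpow_add hm0]
        congr 2; ring

lemma Ctilde_bound (β γ : ℝ) (hβ : β ∈ Set.Icc (-(1 : ℝ) / 2) (1 / 2))
    (hγ : γ ∈ Set.Icc (-(1 : ℝ) / 2) (1 / 2)) (n k : ℕ) (hk : k ≤ n) :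
    |Ctilde γ β n k| ≤ 16 ^ n * (Real.Gamma (n + γ + 1) * Real.Gamma (n + β + 1) /
      (Real.Gamma (γ + 1) * Real.Gamma (β + 1))) := by
  have gγ : 0 < Real.Gamma (γ + 1) := Real.Gamma_pos_of_pos (by linarith [hγ.1])
  have gβ : 0 < Real.Gamma (β + 1) := Real.Gamma_pos_of_pos (by linarith [hβ.1])
  have hn := Nat.cast_nonneg (α := ℝ) n
  have gnγ : 0 < Real.Gamma (n + γ + 1) := Real.Gamma_pos_of_pos (by linarith [hγ.1])
  have gnβ : 0 < Real.Gamma (n + β + 1) := Real.Gamma_pos_of_pos (by linarith [hβ.1])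
  set Q := Real.Gamma (n + γ + 1) * Real.Gamma (n + β + 1) /
      (Real.Gamma (γ + 1) * Real.Gamma (β + 1)) with hQ
  have hQ0 : 0 < Q := by positivity
  have key : ∀ i ∈ Finset.range (k + 1), |(n.choose i : ℝ) * genBinom ((n : ℝ) + γ) (n - i) *
      genBinom ((n : ℝ) + β) i *
      (k.choose i : ℝ) * genBinom ((n : ℝ) - i) (k - i) * (i.factorial : ℝ)| ≤ 8 ^ n * Q := by
    intro i hi
    have hik : i ≤ k := by simpa [Nat.lt_succ_iff] using hi
    obtain ⟨p, rfl⟩ := Nat.exists_eq_add_of_le hik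
    obtain ⟨q, rfl⟩ := Nat.exists_eq_add_of_le hk
    unfold genBinom
    have e1 : i + p + q - i = p + q := by omega
    have e2 : i + p - i = p := by omega
    have w1 := gamma_lower_half (γ + 1) (by linarith [hγ.1]) i
    have w2 := gamma_lower_half (β + 1) (by linarith [hβ.1]) (p + q)
    have c1 : ((i + p + q).choose i : ℝ) ≤ 2 ^ (i + p + q) := by
      exact_mod_cast Nat.choose_le_two_pow _ _
    have c2 : ((i + p).choose i : ℝ) ≤ 2 ^ (i + p + q) := by
      exact_mod_cast (Nat.choose_le_two_pow _ _).trans (Nat.pow_le_pow_right (by norm_num) (by omega))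
    rw [e1, e2]
    have i1 : ((i + p + q : ℕ) : ℝ) + γ - (p + q : ℕ) + 1 = γ + 1 + i := by push_cast; ring
    have i2 : ((i + p + q : ℕ) : ℝ) + β - i + 1 = β + 1 + (p + q : ℕ) := by push_cast; ring
    have i3 : ((i + p + q : ℕ) : ℝ) - i + 1 = (p + q : ℕ) + 1 := by push_cast; ring
    have i4 : ((i + p + q : ℕ) : ℝ) - i - p + 1 = (q : ℕ) + 1 := by push_cast; ring
    rw [i1, i2, i3, i4, Real.Gamma_nat_eq_factorial, Real.Gamma_nat_eq_factorial]
    have g1 : 0 < Real.Gamma (γ + 1 + i) := Real.Gamma_pos_of_pos (by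
      have := Nat.cast_nonneg (α := ℝ) i; linarith [hγ.1])
    have g2 : 0 < Real.Gamma (β + 1 + (p + q : ℕ)) := Real.Gamma_pos_of_pos (by
      have := Nat.cast_nonneg (α := ℝ) (p + q); linarith [hβ.1])
    rw [abs_of_nonneg (by positivity)]
    have f1 : (p.factorial : ℝ)⁻¹ ≤ 1 := inv_le_one_of_one_le₀ (by exact_mod_cast Nat.one_le_iff_ne_zero.2 p.factorial_ne_zero)
    have f2 : (q.factorial : ℝ)⁻¹ ≤ 1 := inv_le_one_of_one_le₀ (by exact_mod_cast Nat.one_le_iff_ne_zero.2 q.factorial_ne_zero)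
    have v1 : (Real.Gamma (γ + 1 + i))⁻¹ ≤ 2 ^ i * (Real.Gamma (γ + 1))⁻¹ := by
      rw [← div_eq_mul_inv, le_div_iff₀ gγ, inv_mul_le_iff₀ g1]; linarith
    have v2 : (Real.Gamma (β + 1 + (p + q : ℕ)))⁻¹ ≤ 2 ^ (p + q) * (Real.Gamma (β + 1))⁻¹ := by
      rw [← div_eq_mul_inv, le_div_iff₀ gβ, inv_mul_le_iff₀ g2]; linarith
    set N := i + p + q
    calc _ = (N.choose i : ℝ) * ((i+p).choose i : ℝ) * (Real.Gamma (N + γ + 1) * Real.Gamma (N + β + 1))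
          * ((Real.Gamma (γ + 1 + i))⁻¹ * (Real.Gamma (β + 1 + (p + q : ℕ)))⁻¹) *
          ((p.factorial : ℝ)⁻¹ * (q.factorial : ℝ)⁻¹) := by field_simp
      _ ≤ 2 ^ N * 2 ^ N * (Real.Gamma (N + γ + 1) * Real.Gamma (N + β + 1))
          * ((2 ^ i * (Real.Gamma (γ + 1))⁻¹) * (2 ^ (p + q) * (Real.Gamma (β + 1))⁻¹)) *
          (1 * 1) := by gcongr
      _ = _ := by
        rw [hQ, show (8:ℝ) = 2 * 2 * 2 by norm_num, mul_pow, mul_pow]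
        have : (2:ℝ) ^ N = 2 ^ i * 2 ^ (p + q) := by rw [← pow_add]; congr 1; omega
        rw [mul_comm]
        nth_rewrite 5 [this]
        field_simp
  unfold Ctilde
  refine (Finset.abs_sum_le_sum_abs _ _).trans ((Finset.sum_le_sum key).trans ?_)
  rw [Finset.sum_const, Finset.card_range, nsmul_eq_mul]
  have : ((k + 1 : ℕ) : ℝ) ≤ 2 ^ n := by
    have : k + 1 ≤ 2 ^ n := by have := Nat.lt_two_pow_self (n := n); omega
    exact_mod_cast this
  calc _ ≤ (2:ℝ) ^ n * (8 ^ n * Q) := by gcongr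
    _ = _ := by rw [← mul_assoc, ← mul_pow]; norm_num

end S7

theorem stmt7 (a b α β γ : ℝ) (hab : a < b) (hβ : β ∈ Set.Icc (-(1 : ℝ) / 2) (1 / 2))
    (hγ : γ ∈ Set.Icc (-(1 : ℝ) / 2) (1 / 2)) (hα : α ∈ Set.Ioo (-1 : ℝ) 0) :
    ∃ C : ℝ, 0 < C ∧ ∀ m n : ℕ, 1 ≤ m →
      |Acoef α γ β m n| ≤ C * cCoef β γ n * (m : ℝ) ^ (-2 * α - γ - 3 / 2) := by
  obtain ⟨CU, hCU, HU⟩ := S7.U_asymp α β γ hβ hγ hα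
  obtain ⟨G, hG, HG⟩ := S7.gamma_upper (α + γ + 1) (by linarith [hα.1, hγ.1]) (by linarith [hα.2, hγ.2])
  have hd := S7.nonint0 hα
  have hE1 : 1 ≤ (min (-α) (1 + α))⁻¹ := by
    rw [one_le_inv₀ hd]
    rcases le_total (-α) (1/2) with h | h
    · exact (min_le_left _ _).trans (by linarith)
    · exact (min_le_right _ _).trans (by linarith)
  have Hk := fun m k => S7.inv_gamma_k hα m k
  set d' := (min (-α) (1 + α))⁻¹ with hd'
  have gγ : 0 < Real.Gamma (γ + 1) := Real.Gamma_pos_of_pos (by linarith [hγ.1])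
  have gβ : 0 < Real.Gamma (β + 1) := Real.Gamma_pos_of_pos (by linarith [hβ.1])
  refine ⟨Real.exp (256 * d') * (G * CU / (Real.Gamma (γ + 1) * Real.Gamma (β + 1))), by positivity,
    fun m n hm => ?_⟩
  have hm1 : (1:ℝ) ≤ m := by exact_mod_cast hm
  have hn := Nat.cast_nonneg (α := ℝ) n
  have gnγ : 0 < Real.Gamma (n + γ + 1) := Real.Gamma_pos_of_pos (by linarith [hγ.1])
  have gnβ : 0 < Real.Gamma (n + β + 1) := Real.Gamma_pos_of_pos (by linarith [hβ.1])
  have gm : 0 < Real.Gamma (β + m + 1) := Real.Gamma_pos_of_pos (by linarith [hβ.1])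
  have gs : 0 < Real.Gamma (m + (α + β + γ + 2)) :=
    Real.Gamma_pos_of_pos (by linarith [hβ.1, hγ.1, hα.1])
  have hsymm : jacobiDelta γ β n = jacobiDelta β γ n := by
    unfold jacobiDelta
    congr 1
    rw [add_comm γ β]
    ring
  have hdn : 0 ≤ jacobiDelta β γ n := Real.sqrt_nonneg _
  have hdm : 0 ≤ jacobiDelta γ β m := Real.sqrt_nonneg _
  set V := Real.Gamma (β + m + 1) / Real.Gamma (m + (α + β + γ + 2)) *
        |(Real.Gamma (α - m + 1))⁻¹| with hV
  have hV0 : 0 ≤ V := by positivity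
  set Q := Real.Gamma (n + γ + 1) * Real.Gamma (n + β + 1) /
      (Real.Gamma (γ + 1) * Real.Gamma (β + 1)) with hQ
  have hQ0 : 0 < Q := by positivity
  have key : ∀ k ∈ Finset.range (n + 1), |(-1 : ℝ) ^ k * Ctilde γ β n k *
      betaB (α + γ + k + 1) (β + m + 1) / Real.Gamma ((k : ℝ) + α - m + 1)| ≤
      16 ^ n * Q * (G * (2 * d') ^ n * V) := by
    intro k hk
    have hkn : k ≤ n := by simpa [Nat.lt_succ_iff] using hk
    have x1 := S7.Ctilde_bound β γ hβ hγ n k hkn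
    have x2 := HG k
    have x3 := Hk m k
    have x4 := S7.gamma_lower_fact (m + (α + β + γ + 2)) (by linarith [hβ.1, hγ.1, hα.1]) k
    have e1 : α + γ + k + 1 = α + γ + 1 + k := by ring
    have e2 : α + γ + k + 1 + (β + m + 1) = m + (α + β + γ + 2) + k := by ring
    have gsk : 0 < Real.Gamma (m + (α + β + γ + 2) + k) := lt_of_lt_of_le (by positivity) x4
    have hpow : (2 * d') ^ k ≤ (2 * d') ^ n := pow_le_pow_right₀ (by linarith) hkn
    unfold betaB
    rw [e2, e1]
    calc _ = |Ctilde γ β n k| * (|Real.Gamma (α + γ + 1 + k)| * Real.Gamma (β + m + 1) *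
          (Real.Gamma (m + (α + β + γ + 2) + k))⁻¹ * |(Real.Gamma ((k : ℝ) + α - m + 1))⁻¹|) := by
          simp only [div_eq_mul_inv, abs_mul, abs_pow, abs_neg, abs_one, one_pow, one_mul, abs_inv,
            abs_of_pos gsk, abs_of_pos gm]
          ring
      _ ≤ (16 ^ n * Q) * ((G * 2 ^ k * k.factorial) * Real.Gamma (β + m + 1) *
          (k.factorial * Real.Gamma (m + (α + β + γ + 2)))⁻¹ *
          (d' ^ k * |(Real.Gamma (α - m + 1))⁻¹|)) := by
          gcongr
      _ = 16 ^ n * Q * (G * (2 * d') ^ k * V) := by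
          rw [hV, mul_pow]
          field_simp
      _ ≤ _ := by gcongr
  have hsum : |∑ k ∈ Finset.range (n + 1), (-1 : ℝ) ^ k * Ctilde γ β n k *
      betaB (α + γ + k + 1) (β + m + 1) / Real.Gamma ((k : ℝ) + α - m + 1)| ≤
      2 ^ n * (16 ^ n * Q * (G * (2 * d') ^ n * V)) := by
    refine (Finset.abs_sum_le_sum_abs _ _).trans ((Finset.sum_le_sum key).trans ?_)
    rw [Finset.sum_const, Finset.card_range, nsmul_eq_mul]
    have h2 : ((n + 1 : ℕ) : ℝ) ≤ 2 ^ n := by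
      exact_mod_cast Nat.lt_two_pow_self (n := n)
    gcongr
  have hexp : (256 * d') ^ n ≤ Real.exp (256 * d') * n.factorial := by
    have := Real.pow_div_factorial_le_exp (x := 256 * d') (by positivity) n
    rwa [div_le_iff₀ (by positivity)] at this
  unfold Acoef cCoef
  rw [abs_mul, abs_mul, abs_of_nonneg hdm, hsymm, abs_of_nonneg hdn]
  have hU := HU m hm
  calc _ ≤ jacobiDelta γ β m * jacobiDelta β γ n * (2 ^ n * (16 ^ n * Q * (G * (2 * d') ^ n * V))) := by
        gcongr
    _ = jacobiDelta β γ n * Q * G / 4 ^ n * (256 * d') ^ n * (jacobiDelta γ β m * V) := by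
        rw [show (256 : ℝ) * d' = 2 * 16 * 4 * (2 * d') by ring, mul_pow (2 * 16 * 4), mul_pow (2 * 16), mul_pow 2 16]
        generalize (2 * d') ^ n = X
        field_simp
    _ ≤ jacobiDelta β γ n * Q * G / 4 ^ n * (Real.exp (256 * d') * n.factorial) *
        (CU * (m : ℝ) ^ (-2 * α - γ - 3 / 2)) := by
        gcongr
    _ = _ := by
        rw [hQ]
        field_simp
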